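/- arXiv:math/0307290 — 2 statements merged into one kernel-verified Lean document; each statement's English description precedes it below -/
import Mathlib

section
/- Let γ ∈ ℝ and let a : ℝ → ℝ be differentiable with a'(t) = -γ a(t) - a(t)³/12 for all t. Define u(x,t) = a(t) sin x - (a(t)²/6) sin 2x. Then u(0,t) = u(π,t) = 0 for all t, and for all x and t the residual of the deterministic Burgers-type equation satisfies exactly: ∂ₜu + u ∂ₓu - ∂ₓₓu - (1-γ)u = (γ a(t)²/6 + a(t)⁴/36) sin 2x - (a(t)³/4) sin 3x + (a(t)⁴/36) sin 4x. In particular the residual contains no sin x or sin 2x component at orders a, a² or a³ with γ = 0, verifying the centre manifold approximation u = a sin x - (a²/6) sin 2x with amplitude equation ȧ = -γa - a³/12 to the stated order. -/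
open Real

/-!
Substituting `p(t) sin kx + q(t) sin lx` into the equation, the linear part acts on each mode
separately, while the advection `u ∂ₓu` only creates the modes `2k`, `2l`, `k + l` and `l - k`. For
`k = 1` and `l = 2` the difference mode is `sin x` again. The choice `q = -p²/6` makes the damping
`3q` of `sin 2x` at `γ = 0` cancel its quadratic forcing `p²/2`, and the feedback `-pq/2 = p³/12` of
the difference mode on `sin x` is what the amplitude equation `ṗ = -γp - p³/12` balances.
-/

/-- The defect `∂ₜu + u ∂ₓu - ∂ₓₓu - (1 - γ)u` at `(x, t)` of a field `u`, written `u x t`, in the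
unforced Burgers-type equation. It is meaningful only where the derivatives involved exist. -/
noncomputable def burgersResidual (γ : ℝ) (u : ℝ → ℝ → ℝ) (x t : ℝ) : ℝ :=
  deriv (fun s => u x s) t + u x t * deriv (fun y => u y t) x
    - deriv (fun y => deriv (fun y' => u y' t) y) x - (1 - γ) * u x t

/-- The spatial profile with amplitudes `p`, `q` on the sine modes of wavenumbers `k`, `l`. A field
evolving in the span of the two modes has this profile at each time, with time-dependent
amplitudes. -/
noncomputable def twoMode (k l p q x : ℝ) : ℝ :=
  p * sin (k * x) + q * sin (l * x)

namespace twoMode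

variable (k l p q x : ℝ)

theorem apply_zero : twoMode k l p q 0 = 0 := by
  simp [twoMode]

theorem intCast_apply_pi (m n : ℤ) : twoMode m n p q π = 0 := by
  simp [twoMode, sin_int_mul_pi]

theorem hasDerivAt :
    HasDerivAt (twoMode k l p q) (k * p * cos (k * x) + l * q * cos (l * x)) x := by
  have hmode (c b : ℝ) : HasDerivAt (fun y => b * sin (c * y)) (c * b * cos (c * x)) x :=
    ((hasDerivAt_const_mul c).sin.const_mul b).congr_deriv (by ring)
  exact (hmode k p).add (hmode l q)

theorem deriv_eq :
    deriv (twoMode k l p q) = fun x => k * p * cos (k * x) + l * q * cos (l * x) :=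
  funext fun x => (hasDerivAt k l p q x).deriv

theorem hasDerivAt_deriv :
    HasDerivAt (deriv (twoMode k l p q)) (twoMode k l (-(k ^ 2 * p)) (-(l ^ 2 * q)) x) x := by
  have hmode (c b : ℝ) :
      HasDerivAt (fun y => c * b * cos (c * y)) (-(c ^ 2 * b) * sin (c * x)) x :=
    ((hasDerivAt_const_mul c).cos.const_mul (c * b)).congr_deriv (by ring)
  rw [deriv_eq]
  exact (hmode k p).add (hmode l q)

theorem hasDerivAt_amplitude {p q : ℝ → ℝ} {p' q' t : ℝ} (hp : HasDerivAt p p' t)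
    (hq : HasDerivAt q q' t) :
    HasDerivAt (fun s => twoMode k l (p s) (q s) x) (twoMode k l p' q' x) t :=
  (hp.mul_const _).add (hq.mul_const _)

theorem mul_deriv :
    twoMode k l p q x * deriv (twoMode k l p q) x =
      k * p ^ 2 / 2 * sin (2 * k * x) + l * q ^ 2 / 2 * sin (2 * l * x)
        + (k + l) * p * q / 2 * sin ((k + l) * x) - (l - k) * p * q / 2 * sin ((l - k) * x) := by
  have hdouble (c : ℝ) : sin (2 * c * x) = 2 * sin (c * x) * cos (c * x) := by
    rw [mul_assoc, sin_two_mul]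
  rw [hdouble, hdouble, add_mul k l x, sub_mul l k x, sin_add, sin_sub, deriv_eq, twoMode]
  ring

end twoMode

theorem burgersResidual_twoMode (γ k l : ℝ) {p q : ℝ → ℝ} {p' q' t : ℝ}
    (hp : HasDerivAt p p' t) (hq : HasDerivAt q q' t) (x : ℝ) :
    burgersResidual γ (fun y s => twoMode k l (p s) (q s) y) x t =
      (p' + (k ^ 2 - 1 + γ) * p t) * sin (k * x) + (q' + (l ^ 2 - 1 + γ) * q t) * sin (l * x)
        + k * p t ^ 2 / 2 * sin (2 * k * x) + l * q t ^ 2 / 2 * sin (2 * l * x)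
        + (k + l) * p t * q t / 2 * sin ((k + l) * x)
        - (l - k) * p t * q t / 2 * sin ((l - k) * x) := by
  have htime := (twoMode.hasDerivAt_amplitude k l x hp hq).deriv
  have hadvection := twoMode.mul_deriv k l (p t) (q t) x
  have hdiffusion := (twoMode.hasDerivAt_deriv k l (p t) (q t) x).deriv
  rw [burgersResidual, htime, hadvection, hdiffusion]
  simp only [twoMode]
  ring

/-- The centre manifold `a sin x - (a²/6) sin 2x`, parametrised by the amplitude `a` of the
critical mode `sin x`. -/
noncomputable def centreManifold (a x : ℝ) : ℝ :=
  twoMode 1 2 a (-(a ^ 2 / 6)) x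

theorem centreManifold_apply_zero (a : ℝ) : centreManifold a 0 = 0 :=
  twoMode.apply_zero ..

theorem centreManifold_apply_pi (a : ℝ) : centreManifold a π = 0 := by
  simpa only [centreManifold, Int.cast_one, Int.cast_ofNat]
    using twoMode.intCast_apply_pi a (-(a ^ 2 / 6)) 1 2

theorem burgersResidual_centreManifold (γ : ℝ) {a : ℝ → ℝ} {a' t : ℝ} (ha : HasDerivAt a a' t)
    (x : ℝ) :
    burgersResidual γ (fun y s => centreManifold (a s) y) x t =
      (a' + γ * a t + a t ^ 3 / 12) * sin x - (a t * a' / 3 + γ * a t ^ 2 / 6) * sin (2 * x)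
        - a t ^ 3 / 4 * sin (3 * x) + a t ^ 4 / 36 * sin (4 * x) := by
  have hslaved : HasDerivAt (fun s => -(a s ^ 2 / 6)) (-(a t * a' / 3)) t :=
    ((ha.fun_pow 2).div_const 6).fun_neg.congr_deriv (by ring)
  simp only [centreManifold]
  rw [burgersResidual_twoMode γ 1 2 ha hslaved, show (2 * 1 : ℝ) = 2 by norm_num,
    show (2 * 2 : ℝ) = 4 by norm_num, show (1 + 2 : ℝ) = 3 by norm_num,
    show (2 - 1 : ℝ) = 1 by norm_num, one_mul x]
  ring

/-- Centre manifold approximation residual for the deterministic Burgers-type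
equation `∂ₜu = -u∂ₓu + ∂ₓₓu + (1-γ)u`, with field
`u = a sin x - (a²/6) sin 2x` and amplitude equation `ȧ = -γa - a³/12`. -/
theorem stmt_0 (γ : ℝ) (a : ℝ → ℝ) (ha : Differentiable ℝ a)
    (hode : ∀ t, deriv a t = -γ * a t - (a t) ^ 3 / 12)
    (u : ℝ → ℝ → ℝ)
    (hu : ∀ x t, u x t = a t * sin x - (a t) ^ 2 / 6 * sin (2 * x)) :
    (∀ t, u 0 t = 0 ∧ u π t = 0) ∧
    ∀ x t,
      deriv (fun s => u x s) t + u x t * deriv (fun y => u y t) x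
        - deriv (fun y => deriv (fun y' => u y' t) y) x - (1 - γ) * u x t
      = (γ * (a t) ^ 2 / 6 + (a t) ^ 4 / 36) * sin (2 * x)
        - (a t) ^ 3 / 4 * sin (3 * x) + (a t) ^ 4 / 36 * sin (4 * x) := by
  have hu_manifold : u = fun x t => centreManifold (a t) x := by
    ext x t
    rw [hu, centreManifold, twoMode, one_mul, neg_mul, sub_eq_add_neg]
  subst hu_manifold
  refine ⟨fun t => ⟨centreManifold_apply_zero _, centreManifold_apply_pi _⟩, fun x t => ?_⟩
  refine (burgersResidual_centreManifold γ (ha t).hasDerivAt x).trans ?_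
  rw [hode]
  ring
end

section
/- Let β₁, β₂ > 0 and define ρ : ℝ² → ℝ by ρ(z₁, z₂) = exp[-(β₁+β₂)z₁² + 2β₂(β₁+β₂)z₁z₂ - β₂(β₁+β₂)²z₂²]. Then ρ satisfies the stationary Fokker–Planck equation of the system ż₁ = -β₁z₁ + φ, ż₂ = -β₂z₂ + z₁ driven by unit white noise φ in z₁; that is, for all (z₁, z₂): ∂_{z₁}(β₁ z₁ ρ) + ∂_{z₂}((β₂ z₂ - z₁) ρ) + (1/2) ∂²_{z₁z₁} ρ = 0. -/
open Real

open Matrix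

/-!
For the linear system `ż = -K z + φ` driven by white noise of covariance `D`, try the density
`p = exp (-zᵀ S z / 2)` with `S` symmetric. Since `∇p = -(S z) p`, every term of the Fokker–Planck
operator is `p` times a polynomial, and altogether the operator gives
`(tr K - tr (D S) / 2 - (K z)ᵀ S z + (S z)ᵀ D S z / 2) p`. The quadratic part vanishes when `S`
solves the Riccati equation `S K + Kᵀ S = S D S`, the constant part when `2 tr K = tr (D S)`.
The theorem is the case `K = !![β₁, 0; -1, β₂]`, `D = !![1, 0; 0, 0]`, where
`S = 2 (β₁ + β₂) !![1, -β₂; -β₂, β₂ (β₁ + β₂)]` solves both equations.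
-/

section LineDeriv

variable {𝕜 : Type*} [NontriviallyNormedField 𝕜]

lemma hasLineDerivAt_fun_mul {E 𝔸 : Type*} [AddCommGroup E] [Module 𝕜 E] [NormedRing 𝔸]
    [NormedAlgebra 𝕜 𝔸] {f g : E → 𝔸} {f' g' : 𝔸} {z v : E}
    (hf : HasLineDerivAt 𝕜 f f' z v) (hg : HasLineDerivAt 𝕜 g g' z v) :
    HasLineDerivAt 𝕜 (fun w => f w * g w) (f' * g z + f z * g') z v := by
  simpa [HasLineDerivAt] using HasDerivAt.fun_mul hf hg

lemma lineDeriv_single_one {ι F : Type*} [DecidableEq ι] [NormedAddCommGroup F]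
    [NormedSpace 𝕜 F] (f : (ι → 𝕜) → F) (z : ι → 𝕜) (i : ι) :
    lineDeriv 𝕜 f z (Pi.single i 1) = deriv (fun t => f (Function.update z i t)) (z i) := by
  have update_eq (t : 𝕜) : Function.update z i (z i + t) = z + t • Pi.single i 1 := by
    ext j
    obtain rfl | hj := eq_or_ne j i <;> simp [*]
  simpa [lineDeriv, update_eq] using
    deriv_comp_const_add (fun t => f (Function.update z i t)) (z i) 0

lemma hasLineDerivAt_mulVec_apply {ι κ : Type*} [Fintype ι] (K : Matrix κ ι 𝕜) (i : κ)
    (z v : ι → 𝕜) : HasLineDerivAt 𝕜 (fun w => (K *ᵥ w) i) ((K *ᵥ v) i) z v := by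
  simpa [HasLineDerivAt, mulVec_add, mulVec_smul] using
    ((hasDerivAt_id' (0 : 𝕜)).mul_const ((K *ᵥ v) i)).const_add ((K *ᵥ z) i)

end LineDeriv

section FokkerPlanck

variable {ι : Type*} [Fintype ι]

/-- The unnormalised centred Gaussian density `exp (-zᵀ S z / 2)` with precision (inverse
covariance) matrix `S`. Neither symmetry nor positivity of `S` is built in. -/
noncomputable def gaussianWeight (S : Matrix ι ι ℝ) (z : ι → ℝ) : ℝ :=
  exp (-(z ⬝ᵥ S *ᵥ z) / 2)

lemma hasLineDerivAt_gaussianWeight {S : Matrix ι ι ℝ} (hS : S.IsSymm) (z v : ι → ℝ) :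
    HasLineDerivAt ℝ (gaussianWeight S) (-(v ⬝ᵥ S *ᵥ z) * gaussianWeight S z) z v := by
  have symm : z ⬝ᵥ S *ᵥ v = v ⬝ᵥ S *ᵥ z := by
    rw [← dotProduct_transpose_mulVec, hS.eq]
  have expand (t : ℝ) : (z + t • v) ⬝ᵥ S *ᵥ (z + t • v) =
      z ⬝ᵥ S *ᵥ z + 2 * (v ⬝ᵥ S *ᵥ z) * t + (v ⬝ᵥ S *ᵥ v) * t ^ 2 := by
    simp only [mulVec_add, mulVec_smul, add_dotProduct, dotProduct_add, smul_dotProduct,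
      dotProduct_smul, smul_eq_mul, symm]
    ring
  have exponent : HasDerivAt (fun t : ℝ => -((z + t • v) ⬝ᵥ S *ᵥ (z + t • v)) / 2)
      (-(v ⬝ᵥ S *ᵥ z)) 0 := by
    simp only [expand]
    refine HasDerivAt.congr_deriv (((((hasDerivAt_id' (0 : ℝ)).const_mul _).const_add _).add
      (((hasDerivAt_id' (0 : ℝ)).pow 2).const_mul _)).neg.div_const 2) ?_
    ring
  simpa [HasLineDerivAt, gaussianWeight, mul_comm] using exponent.exp

variable [DecidableEq ι]

/-- The Fokker–Planck operator `p ↦ ∑ i, ∂ᵢ((K z)ᵢ p) + ½ ∑ i j, Dᵢⱼ ∂ᵢ∂ⱼ p` of the linear system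
`ż = -K z + φ`, where the white noise `φ` has covariance matrix `D`. Partial derivatives are line
derivatives along the standard basis. -/
noncomputable def fokkerPlanck (K D : Matrix ι ι ℝ) (p : (ι → ℝ) → ℝ) (z : ι → ℝ) : ℝ :=
  ∑ i, lineDeriv ℝ (fun w => (K *ᵥ w) i * p w) z (Pi.single i 1) +
    1 / 2 * ∑ i, ∑ j, D i j *
      lineDeriv ℝ (fun w => lineDeriv ℝ p w (Pi.single j 1)) z (Pi.single i 1)

lemma lineDeriv_mulVec_mul_gaussianWeight (K : Matrix ι ι ℝ) {S : Matrix ι ι ℝ} (hS : S.IsSymm)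
    (z : ι → ℝ) (i : ι) :
    lineDeriv ℝ (fun w => (K *ᵥ w) i * gaussianWeight S w) z (Pi.single i 1) =
      (K i i - (K *ᵥ z) i * (S *ᵥ z) i) * gaussianWeight S z := by
  rw [(hasLineDerivAt_fun_mul (hasLineDerivAt_mulVec_apply K i z _)
    (hasLineDerivAt_gaussianWeight hS z _)).lineDeriv]
  simp only [mulVec_single_one, single_one_dotProduct, col_apply]
  ring

lemma lineDeriv_lineDeriv_gaussianWeight {S : Matrix ι ι ℝ} (hS : S.IsSymm) (z : ι → ℝ)
    (i j : ι) :
    lineDeriv ℝ (fun w => lineDeriv ℝ (gaussianWeight S) w (Pi.single j 1)) z (Pi.single i 1) =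
      ((S *ᵥ z) i * (S *ᵥ z) j - S j i) * gaussianWeight S z := by
  have first (w : ι → ℝ) : lineDeriv ℝ (gaussianWeight S) w (Pi.single j 1) =
      ((-S) *ᵥ w) j * gaussianWeight S w := by
    rw [(hasLineDerivAt_gaussianWeight hS w _).lineDeriv, single_one_dotProduct, neg_mulVec,
      Pi.neg_apply]
  simp only [first]
  rw [(hasLineDerivAt_fun_mul (hasLineDerivAt_mulVec_apply (-S) j z _)
    (hasLineDerivAt_gaussianWeight hS z _)).lineDeriv]
  simp only [neg_mulVec, Pi.neg_apply, mulVec_single_one, single_one_dotProduct, col_apply,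
    Matrix.neg_apply]
  ring

theorem fokkerPlanck_gaussianWeight (K D : Matrix ι ι ℝ) {S : Matrix ι ι ℝ} (hS : S.IsSymm)
    (z : ι → ℝ) :
    fokkerPlanck K D (gaussianWeight S) z =
      (K.trace - (D * S).trace / 2 - K *ᵥ z ⬝ᵥ S *ᵥ z + (S *ᵥ z ⬝ᵥ D *ᵥ S *ᵥ z) / 2) *
        gaussianWeight S z := by
  have drift : ∑ i, (K i i - (K *ᵥ z) i * (S *ᵥ z) i) = K.trace - K *ᵥ z ⬝ᵥ S *ᵥ z :=
    Finset.sum_sub_distrib ..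
  have diffusion : ∑ i, ∑ j, D i j * ((S *ᵥ z) i * (S *ᵥ z) j - S j i) =
      S *ᵥ z ⬝ᵥ D *ᵥ S *ᵥ z - (D * S).trace := by
    simp only [mul_sub, Finset.sum_sub_distrib]
    congr 1
    rw [dot_mulVec_eq_sum_sum, Finset.sum_comm]
    exact Finset.sum_congr rfl fun i _ => Finset.sum_congr rfl fun j _ => by ring
  simp only [fokkerPlanck, lineDeriv_mulVec_mul_gaussianWeight K hS,
    lineDeriv_lineDeriv_gaussianWeight hS, ← mul_assoc, ← Finset.sum_mul]
  simp only [mul_assoc, drift, diffusion]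
  ring

theorem fokkerPlanck_gaussianWeight_eq_zero {K D S : Matrix ι ι ℝ} (hS : S.IsSymm)
    (riccati : S * K + Kᵀ * S = S * D * S) (trace_eq : 2 * K.trace = (D * S).trace)
    (z : ι → ℝ) : fokkerPlanck K D (gaussianWeight S) z = 0 := by
  have self_adjoint (w : ι → ℝ) : z ⬝ᵥ S *ᵥ w = S *ᵥ z ⬝ᵥ w := by
    rw [dotProduct_mulVec, ← mulVec_transpose, hS.eq]
  have quadratic : 2 * (K *ᵥ z ⬝ᵥ S *ᵥ z) = S *ᵥ z ⬝ᵥ D *ᵥ S *ᵥ z :=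
    calc
      2 * (K *ᵥ z ⬝ᵥ S *ᵥ z) = z ⬝ᵥ (S * K + Kᵀ * S) *ᵥ z := by
        rw [add_mulVec, dotProduct_add, ← mulVec_mulVec, ← mulVec_mulVec, self_adjoint,
          dotProduct_transpose_mulVec, dotProduct_comm (K *ᵥ z), two_mul]
      _ = z ⬝ᵥ (S * D * S) *ᵥ z := by rw [riccati]
      _ = S *ᵥ z ⬝ᵥ D *ᵥ S *ᵥ z := by
        rw [mul_assoc, ← mulVec_mulVec, ← mulVec_mulVec, self_adjoint]
  rw [fokkerPlanck_gaussianWeight K D hS]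
  linear_combination (trace_eq - quadratic) / 2 * gaussianWeight S z

end FokkerPlanck

lemma fokkerPlanck_fin_two_noise_fst (K : Matrix (Fin 2) (Fin 2) ℝ) (p : (Fin 2 → ℝ) → ℝ)
    (x y : ℝ) :
    fokkerPlanck K !![1, 0; 0, 0] p ![x, y] =
      deriv (fun w => (K 0 0 * w + K 0 1 * y) * p ![w, y]) x +
      deriv (fun w => (K 1 0 * x + K 1 1 * w) * p ![x, w]) y +
      1 / 2 * deriv (fun w => deriv (fun v => p ![v, y]) w) x := by
  have update_zero (a b t : ℝ) : Function.update ![a, b] 0 t = ![t, b] := by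
    ext i; fin_cases i <;> rfl
  have update_one (a b t : ℝ) : Function.update ![a, b] 1 t = ![a, t] := by
    ext i; fin_cases i <;> rfl
  simp [fokkerPlanck, lineDeriv_single_one, update_zero, update_one]

theorem stmt_3_general (β₁ β₂ : ℝ) (ρ : ℝ → ℝ → ℝ)
    (hρ : ∀ z₁ z₂, ρ z₁ z₂ =
      exp (-(β₁ + β₂) * z₁ ^ 2 + 2 * β₂ * (β₁ + β₂) * z₁ * z₂
        - β₂ * (β₁ + β₂) ^ 2 * z₂ ^ 2)) :
    ∀ z₁ z₂ : ℝ,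
      deriv (fun w => β₁ * w * ρ w z₂) z₁
        + deriv (fun w => (β₂ * w - z₁) * ρ z₁ w) z₂
        + (1 / 2) * deriv (fun w => deriv (fun v => ρ v z₂) w) z₁ = 0 := by
  intro z₁ z₂
  let K : Matrix (Fin 2) (Fin 2) ℝ := !![β₁, 0; -1, β₂]
  let D : Matrix (Fin 2) (Fin 2) ℝ := !![1, 0; 0, 0]
  let S : Matrix (Fin 2) (Fin 2) ℝ :=
    !![2 * (β₁ + β₂), -2 * β₂ * (β₁ + β₂); -2 * β₂ * (β₁ + β₂), 2 * β₂ * (β₁ + β₂) ^ 2]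
  have ρ_eq (x y : ℝ) : ρ x y = gaussianWeight S ![x, y] := by
    rw [hρ, gaussianWeight]
    simp only [S, cons_mulVec, empty_mulVec, vec2_dotProduct']
    congr 1
    ring
  have hS : S.IsSymm := by
    ext i j
    fin_cases i <;> fin_cases j <;> simp [S]
  have riccati : S * K + Kᵀ * S = S * D * S := by
    ext i j
    fin_cases i <;> fin_cases j <;> simp [S, K, D, mul_apply] <;> ring
  have trace_eq : 2 * K.trace = (D * S).trace := by
    simp [S, K, D, trace_fin_two]
  have stationary := fokkerPlanck_gaussianWeight_eq_zero hS riccati trace_eq ![z₁, z₂]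
  rw [fokkerPlanck_fin_two_noise_fst] at stationary
  simpa [K, ρ_eq, sub_eq_neg_add] using stationary

/-- The Gaussian density `ρ(z₁,z₂) = exp[-(β₁+β₂)z₁² + 2β₂(β₁+β₂)z₁z₂
- β₂(β₁+β₂)²z₂²]` satisfies the stationary Fokker–Planck equation of the
system `ż₁ = -β₁z₁ + φ`, `ż₂ = -β₂z₂ + z₁` driven by unit white noise. -/
theorem stmt_3 (β₁ β₂ : ℝ) (hβ₁ : 0 < β₁) (hβ₂ : 0 < β₂)
    (ρ : ℝ → ℝ → ℝ)
    (hρ : ∀ z₁ z₂, ρ z₁ z₂ =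
      exp (-(β₁ + β₂) * z₁ ^ 2 + 2 * β₂ * (β₁ + β₂) * z₁ * z₂
        - β₂ * (β₁ + β₂) ^ 2 * z₂ ^ 2)) :
    ∀ z₁ z₂ : ℝ,
      deriv (fun w => β₁ * w * ρ w z₂) z₁
        + deriv (fun w => (β₂ * w - z₁) * ρ z₁ w) z₂
        + (1 / 2) * deriv (fun w => deriv (fun v => ρ v z₂) w) z₁ = 0 := by
  exact stmt_3_general β₁ β₂ ρ hρ
end
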